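/- arXiv:1409.6352 — 3 statements merged into one kernel-verified Lean document; each statement's English description precedes it below -/
import Mathlib

section
/- For a point z = x + iy of the upper half-plane ℍ, the following are equivalent: (i) there exist integers a and q ≥ 1 with gcd(a,q) = 1 such that |z − (a/q + i/(2q²))| < 1/(2q²) (i.e., z lies in the interior of some Ford disk); (ii) there exists γ = (a b; c d) ∈ SL(2,ℤ) with c ≠ 0 such that Im(γ·z) > 1, where γ·z = (az+b)/(cz+d). -/
open Complex

lemma ford_disk_iff (z : ℂ) (a q : ℤ) (hq : 1 ≤ q) :
    ‖z - ((a : ℂ) / q + Complex.I / (2 * (q : ℂ) ^ 2))‖ < 1 / (2 * (q : ℝ) ^ 2) ↔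
      ((q : ℝ) * z.re - a) ^ 2 + ((q : ℝ) * z.im) ^ 2 < z.im := by
  have hq0 : (0 : ℝ) < q := by exact_mod_cast (by omega : 0 < q)
  have e : z - ((a : ℂ) / q + Complex.I / (2 * (q : ℂ) ^ 2))
      = ⟨z.re - a / q, z.im - 1 / (2 * (q : ℝ) ^ 2)⟩ := by
    have h1 : ((a : ℂ) / q) = (((a : ℝ) / q : ℝ) : ℂ) := by push_cast; rfl
    have h2 : Complex.I / (2 * (q : ℂ) ^ 2) = ((1 / (2 * (q : ℝ) ^ 2) : ℝ) : ℂ) * Complex.I := by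
      push_cast; ring
    rw [h1, h2]
    apply Complex.ext
    · simp only [sub_re, add_re, ofReal_re, mul_re, I_re, I_im, ofReal_im]; ring
    · simp only [sub_im, add_im, ofReal_re, mul_im, I_re, I_im, ofReal_im]; ring
  have hr : (0 : ℝ) ≤ 1 / (2 * (q : ℝ) ^ 2) := by positivity
  rw [e, ← sq_lt_sq₀ (norm_nonneg _) hr, ← Complex.normSq_eq_norm_sq, Complex.normSq_mk]
  have key : ((1 / (2 * (q : ℝ) ^ 2)) ^ 2 - ((z.re - a / q) * (z.re - a / q)
      + (z.im - 1 / (2 * (q : ℝ) ^ 2)) * (z.im - 1 / (2 * (q : ℝ) ^ 2)))) * (q : ℝ) ^ 2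
      = z.im - (((q : ℝ) * z.re - a) ^ 2 + ((q : ℝ) * z.im) ^ 2) := by
    field_simp
    ring
  rw [← sub_pos, ← sub_pos (b := _ + ((q : ℝ) * z.im) ^ 2), ← key]
  exact (mul_pos_iff_of_pos_right (by positivity)).symm

lemma ford_im_iff (z : ℂ) (hz : 0 < z.im) (a b c d : ℤ) (h : a * d - b * c = 1) (hc : c ≠ 0) :
    1 < ((((a : ℂ) * z + b) / ((c : ℂ) * z + d)).im) ↔
      ((c : ℝ) * z.re + d) ^ 2 + ((c : ℝ) * z.im) ^ 2 < z.im := by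
  have hR : (a : ℝ) * d - b * c = 1 := by exact_mod_cast h
  have hc' : (c : ℝ) ≠ 0 := by exact_mod_cast hc
  have hpos : 0 < ((c : ℝ) * z.re + d) ^ 2 + ((c : ℝ) * z.im) ^ 2 := by positivity
  have hn : Complex.normSq ((c : ℂ) * z + d)
      = ((c : ℝ) * z.re + d) ^ 2 + ((c : ℝ) * z.im) ^ 2 := by
    simp [Complex.normSq_apply]; ring
  have e : (((a : ℂ) * z + b) / ((c : ℂ) * z + d)).im
      = z.im / (((c : ℝ) * z.re + d) ^ 2 + ((c : ℝ) * z.im) ^ 2) := by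
    rw [Complex.div_im, hn, ← sub_div]
    congr 1
    simp
    linear_combination z.im * hR
  rw [e, one_lt_div hpos]

/-- A point `z` of the upper half-plane lies in the interior of some Ford disk if and only if
some `γ ∈ SL(2,ℤ)` with lower-left entry `c ≠ 0` moves `z` to a point of imaginary part `> 1`. -/
theorem mem_fordDisk_iff_exists_sl2
    (z : ℂ) (hz : 0 < z.im) :
    (∃ a q : ℤ, 1 ≤ q ∧ Int.gcd a q = 1 ∧
        ‖z - ((a : ℂ) / q + Complex.I / (2 * (q : ℂ) ^ 2))‖ < 1 / (2 * (q : ℝ) ^ 2))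
      ↔
    (∃ a b c d : ℤ, a * d - b * c = 1 ∧ c ≠ 0 ∧
        1 < ((((a : ℂ) * z + b) / ((c : ℂ) * z + d)).im)) := by
  constructor
  · rintro ⟨a, q, hq, hg, hn⟩
    rw [ford_disk_iff z a q hq] at hn
    obtain ⟨u, v, huv⟩ := Int.isCoprime_iff_gcd_eq_one.mpr hg
    have hdet : (-u) * (-a) - (-v) * q = 1 := by linear_combination huv
    refine ⟨-u, -v, q, -a, hdet, by omega, ?_⟩
    rw [ford_im_iff z hz _ _ _ _ hdet (by omega)]
    push_cast
    linarith
  · rintro ⟨a, b, c, d, hdet, hc, h⟩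
    rw [ford_im_iff z hz _ _ _ _ hdet hc] at h
    rcases lt_or_gt_of_ne hc with hc' | hc'
    · refine ⟨d, -c, by omega, Int.isCoprime_iff_gcd_eq_one.mp
        ⟨a, b, by linear_combination hdet⟩, ?_⟩
      rw [ford_disk_iff z _ _ (by omega)]
      push_cast
      linarith
    · refine ⟨-d, c, by omega, Int.isCoprime_iff_gcd_eq_one.mp
        ⟨-a, -b, by linear_combination hdet⟩, ?_⟩
      rw [ford_disk_iff z _ _ (by omega)]
      push_cast
      linarith
end

section
/- There exists an absolute constant C > 0 such that for all integers Q ≥ 2 and all integers D with 2 ≤ D ≤ Q, one has |(2/Q) · Σ_{1 ≤ d ≤ D} (μ(d)/d) · Σ_{m=1}^{⌊Q/d⌋} √(1 − d²m²/Q²) − 3/π| ≤ C·(1/D + (log D)/Q), where μ is the Möbius function. -/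
open scoped ArithmeticFunction

/-- The quarter circle integral. -/
lemma aux_quarter : ∫ x in (0 : ℝ)..1, Real.sqrt (1 - x ^ 2) = Real.pi / 4 := by
  have h := integral_sqrt_one_sub_sq
  have hc : Continuous fun x : ℝ => Real.sqrt (1 - x ^ 2) := by fun_prop
  rw [← intervalIntegral.integral_add_adjacent_intervals (b := 0)
    (hc.intervalIntegrable _ _) (hc.intervalIntegrable _ _)] at h
  have h2 : ∫ x in (-1 : ℝ)..0, Real.sqrt (1 - x ^ 2)
      = ∫ x in (0 : ℝ)..1, Real.sqrt (1 - x ^ 2) := by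
    have := intervalIntegral.integral_comp_neg (a := 0) (b := 1)
      (fun x : ℝ => Real.sqrt (1 - x ^ 2))
    simp only [neg_zero, neg_sq] at this
    exact this.symm
  linarith

lemma aux_integral (c : ℝ) (hc : 1 ≤ c) :
    ∫ x in (0 : ℝ)..c, Real.sqrt (1 - x ^ 2) = Real.pi / 4 := by
  have hcont : Continuous fun x : ℝ => Real.sqrt (1 - x ^ 2) := by fun_prop
  rw [← intervalIntegral.integral_add_adjacent_intervals (b := 1)
    (hcont.intervalIntegrable _ _) (hcont.intervalIntegrable _ _), aux_quarter]
  have : ∫ x in (1 : ℝ)..c, Real.sqrt (1 - x ^ 2) = ∫ x in (1 : ℝ)..c, (0 : ℝ) := by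
    apply intervalIntegral.integral_congr
    intro x hx
    rw [Set.uIcc_of_le hc] at hx
    apply Real.sqrt_eq_zero_of_nonpos
    nlinarith [hx.1]
  rw [this]; simp

/-- The inner sum is the integral up to an error of at most 1. -/
lemma aux_inner (Q d : ℕ) (hQ : 0 < Q) (hd : 0 < d) :
    |(∑ m ∈ Finset.Icc 1 (Q / d),
        Real.sqrt (1 - (d : ℝ) ^ 2 * (m : ℝ) ^ 2 / (Q : ℝ) ^ 2)) -
      (Q : ℝ) / d * (Real.pi / 4)| ≤ 1 := by
  have hQ' : (0 : ℝ) < Q := by exact_mod_cast hQ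
  have hd' : (0 : ℝ) < d := by exact_mod_cast hd
  set N := Q / d with hN
  set f : ℝ → ℝ := fun x => Real.sqrt (1 - (d : ℝ) ^ 2 * x ^ 2 / (Q : ℝ) ^ 2) with hf
  have hanti : ∀ b : ℝ, AntitoneOn f (Set.Icc (0:ℝ) (0 + b)) := by
    intro b x hx y hy hxy
    have := hx.1
    simp only [hf]
    gcongr
  have hI : ∫ x in (0 : ℝ)..(0 + ((N + 1 : ℕ) : ℝ)), f x = (Q : ℝ) / d * (Real.pi / 4) := by
    have h1 : f = fun x => (fun y => Real.sqrt (1 - y ^ 2)) (x * ((d : ℝ) / Q)) := by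
      funext x
      simp only [hf]
      congr 2
      field_simp
    rw [h1, intervalIntegral.integral_comp_mul_right _ (by positivity)]
    rw [zero_mul, aux_integral]
    · simp
    · have : Q < (N + 1) * d := by
        rw [hN]; exact Nat.lt_mul_of_div_lt (Nat.lt_succ_self _) hd
      have h2 : (Q : ℝ) < ((N + 1 : ℕ) : ℝ) * d := by exact_mod_cast this
      rw [zero_add, ← mul_div_assoc, le_div_iff₀ hQ']
      linarith
  have hlo := (hanti ((N + 1 : ℕ) : ℝ)).integral_le_sum
  have hhi := (hanti ((N + 1 : ℕ) : ℝ)).sum_le_integral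
  rw [hI] at hlo hhi
  have hS : ∑ m ∈ Finset.Icc 1 N, Real.sqrt (1 - (d : ℝ) ^ 2 * (m : ℝ) ^ 2 / (Q : ℝ) ^ 2)
      = ∑ i ∈ Finset.range N, f (0 + ((i + 1 : ℕ) : ℝ)) := by
    rw [Finset.range_eq_Ico, Finset.sum_Ico_add' (fun i : ℕ => f (0 + (i : ℝ))) 0 N 1]
    apply Finset.sum_congr
    · ext; simp
    · intro x _; simp [hf]
  rw [hS]
  rw [Finset.sum_range_succ'] at hlo
  rw [Finset.sum_range_succ] at hhi
  have h0 : f (0 + ((0 : ℕ) : ℝ)) = 1 := by simp [hf]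
  have hpos : 0 ≤ f (0 + ((N + 1 : ℕ) : ℝ)) := Real.sqrt_nonneg _
  rw [h0] at hlo
  rw [abs_le]
  constructor <;> linarith

lemma aux_hasSum : HasSum (fun n : ℕ => ((ArithmeticFunction.moebius n : ℤ) : ℝ) / (n : ℝ) ^ 2)
    (6 / Real.pi ^ 2) := by
  have hs : (1 : ℝ) < (2 : ℂ).re := by norm_num
  have h1 := ArithmeticFunction.LSeries_zeta_mul_Lseries_moebius hs
  rw [ArithmeticFunction.LSeries_zeta_eq_riemannZeta hs, riemannZeta_two] at h1
  have hsum := (ArithmeticFunction.LSeriesSummable_moebius_iff.mpr hs).LSeriesHasSum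
  have hpi : (Real.pi : ℂ) ≠ 0 := by exact_mod_cast Real.pi_ne_zero
  have hv : LSeries (fun n => ((ArithmeticFunction.moebius n : ℤ) : ℂ)) 2
      = ((6 / Real.pi ^ 2 : ℝ) : ℂ) := by
    push_cast
    field_simp
    field_simp at h1
    linear_combination h1
  rw [hv] at hsum
  unfold LSeriesHasSum at hsum
  rw [← Complex.hasSum_ofReal]
  convert hsum using 2 with n
  rcases eq_or_ne n 0 with rfl | hn
  · simp
  · rw [LSeries.term_of_ne_zero hn]
    push_cast
    norm_cast

lemma aux_tail (D : ℕ) (hD : 1 ≤ D) :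
    |(∑ d ∈ Finset.Icc 1 D, ((ArithmeticFunction.moebius d : ℤ) : ℝ) / (d : ℝ) ^ 2)
      - 6 / Real.pi ^ 2| ≤ (1 : ℝ) / (D : ℝ) := by
  have hlim := (aux_hasSum.tendsto_sum_nat).comp (Filter.tendsto_add_atTop_nat 1)
  have hl2 := (hlim.const_sub (∑ d ∈ Finset.Icc 1 D,
    ((ArithmeticFunction.moebius d : ℤ) : ℝ) / (d : ℝ) ^ 2)).abs
  refine le_of_tendsto hl2 ?_
  filter_upwards [Filter.eventually_ge_atTop D] with n hn
  have hr : ∑ i ∈ Finset.range (n + 1), ((ArithmeticFunction.moebius i : ℤ) : ℝ) / (i : ℝ) ^ 2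
      = ∑ d ∈ Finset.Icc 1 D, ((ArithmeticFunction.moebius d : ℤ) : ℝ) / (d : ℝ) ^ 2
        + ∑ d ∈ Finset.Ioc D n, ((ArithmeticFunction.moebius d : ℤ) : ℝ) / (d : ℝ) ^ 2 := by
    rw [← Finset.sum_union]
    · symm
      apply Finset.sum_subset
      · intro x; simp; omega
      · intro x hx hx2
        have : x = 0 := by simp at hx hx2; omega
        simp [this]
    · rw [Finset.disjoint_left]; intro x; simp; omega
  simp only [Function.comp]
  rw [hr, sub_add_cancel_left, abs_neg]
  calc _ ≤ ∑ d ∈ Finset.Ioc D n, |((ArithmeticFunction.moebius d : ℤ) : ℝ) / (d : ℝ) ^ 2| :=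
        Finset.abs_sum_le_sum_abs _ _
    _ ≤ ∑ d ∈ Finset.Ioc D n, ((d : ℝ) ^ 2)⁻¹ := by
        apply Finset.sum_le_sum
        intro d _
        rw [abs_div, abs_of_nonneg (sq_nonneg (d : ℝ)), ← one_div]
        gcongr
        exact_mod_cast ArithmeticFunction.abs_moebius_le_one
    _ ≤ (D : ℝ)⁻¹ - (n : ℝ)⁻¹ := sum_Ioc_inv_sq_le_sub (by omega) hn
    _ ≤ 1 / D := by
        have : (0 : ℝ) ≤ (n : ℝ)⁻¹ := by positivity
        rw [one_div]; linarith

lemma aux_harm (D : ℕ) : ∑ d ∈ Finset.Icc 1 D, (1 : ℝ) / d ≤ 1 + Real.log D := by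
  have := harmonic_le_one_add_log D
  rw [harmonic_eq_sum_Icc] at this
  push_cast at this
  simpa using this

/-- Main-term estimate: the contribution of `1 ≤ d ≤ D` is `3/π + O(1/D + log D / Q)`. -/
theorem moebius_main_sum_estimate :
    ∃ C : ℝ, 0 < C ∧ ∀ Q : ℕ, 2 ≤ Q → ∀ D : ℕ, 2 ≤ D → D ≤ Q →
      |(2 / (Q : ℝ)) * (∑ d ∈ Finset.Icc 1 D,
          ((ArithmeticFunction.moebius d : ℤ) : ℝ) / d *
            ∑ m ∈ Finset.Icc 1 (Q / d),
              Real.sqrt (1 - (d : ℝ) ^ 2 * (m : ℝ) ^ 2 / (Q : ℝ) ^ 2)) -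
        3 / Real.pi| ≤ C * (1 / D + Real.log D / Q) := by
  refine ⟨6, by norm_num, ?_⟩
  intro Q hQ D hD hDQ
  have hQ' : (0 : ℝ) < Q := by exact_mod_cast (by omega : 0 < Q)
  have hD' : (2 : ℝ) ≤ D := by exact_mod_cast hD
  have hpi := Real.pi_pos
  set S : ℕ → ℝ := fun d => ∑ m ∈ Finset.Icc 1 (Q / d),
    Real.sqrt (1 - (d : ℝ) ^ 2 * (m : ℝ) ^ 2 / (Q : ℝ) ^ 2) with hS
  set M : ℕ → ℝ := fun d => ((ArithmeticFunction.moebius d : ℤ) : ℝ) with hM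
  have hsplit : (2 / (Q : ℝ)) * (∑ d ∈ Finset.Icc 1 D, M d / d * S d) - 3 / Real.pi
      = (2 / (Q : ℝ)) * (∑ d ∈ Finset.Icc 1 D, M d / d * (S d - (Q : ℝ) / d * (Real.pi / 4)))
        + Real.pi / 2 * ((∑ d ∈ Finset.Icc 1 D, M d / (d : ℝ) ^ 2) - 6 / Real.pi ^ 2) := by
    have h1 : ∑ d ∈ Finset.Icc 1 D, M d / d * (S d - (Q : ℝ) / d * (Real.pi / 4))
        = ∑ d ∈ Finset.Icc 1 D, M d / d * S d
          - Q * (Real.pi / 4) * ∑ d ∈ Finset.Icc 1 D, M d / (d : ℝ) ^ 2 := by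
      rw [Finset.mul_sum, ← Finset.sum_sub_distrib]
      apply Finset.sum_congr rfl
      intro d _
      ring
    rw [h1]
    field_simp
    ring
  have herr : |∑ d ∈ Finset.Icc 1 D, M d / d * (S d - (Q : ℝ) / d * (Real.pi / 4))|
      ≤ 1 + Real.log D := by
    refine (Finset.abs_sum_le_sum_abs _ _).trans (le_trans ?_ (aux_harm D))
    apply Finset.sum_le_sum
    intro d hd
    have hd1 : 0 < d := (Finset.mem_Icc.mp hd).1
    have h2 := aux_inner Q d (by omega) hd1
    have h3 : |M d| ≤ 1 := by
      simp only [hM]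
      exact_mod_cast ArithmeticFunction.abs_moebius_le_one
    rw [abs_mul, abs_div, Nat.abs_cast]
    calc |M d| / d * |S d - (Q : ℝ) / d * (Real.pi / 4)| ≤ 1 / d * 1 := by gcongr
      _ = 1 / d := mul_one _
  have htail := aux_tail D (by omega)
  have hlog : 1 / 2 ≤ Real.log D := by
    have := Real.log_le_log (by norm_num) hD'
    have := Real.log_two_gt_d9
    linarith
  change |(2 / (Q : ℝ)) * (∑ d ∈ Finset.Icc 1 D, M d / d * S d) - 3 / Real.pi| ≤ _
  rw [hsplit]
  refine (abs_add_le _ _).trans ?_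
  rw [abs_mul, abs_mul, abs_of_pos (by positivity : 0 < 2 / (Q : ℝ)),
    abs_of_pos (by positivity : 0 < Real.pi / 2)]
  have hA : 2 / (Q : ℝ) * |∑ d ∈ Finset.Icc 1 D, M d / d * (S d - (Q : ℝ) / d * (Real.pi / 4))|
      ≤ 6 * (Real.log D / Q) := by
    calc _ ≤ 2 / (Q : ℝ) * (3 * Real.log D) := by
          gcongr
          linarith
      _ = _ := by ring
  have hB : Real.pi / 2 * |(∑ d ∈ Finset.Icc 1 D, M d / (d : ℝ) ^ 2) - 6 / Real.pi ^ 2|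
      ≤ 6 * (1 / D) := by
    have := Real.pi_le_four
    gcongr
    linarith
  linarith
end

section
/- Let s be a complex number with Re(s) > 1 and let y > 0. Then ∫₀¹ E(s, x + iy) dx = y^s + φ̂(s)·y^{1−s}, where E(s, z) = (1/2) · Σ_{(c,d) ∈ ℤ², gcd(c,d)=1} (Im z)^s / |cz + d|^{2s} is the real-analytic Eisenstein series for SL(2,ℤ) and φ̂(s) = √π · Γ(s−1/2)/Γ(s) · ζ(2s−1)/ζ(2s), with ζ the Riemann zeta function and Γ the Gamma function. -/
open Complex

/-- The real-analytic Eisenstein series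
`E(s, z) = (1/2) Σ_{(c,d) coprime} (Im z)^s / |cz + d|^{2s}`. -/
noncomputable def eisenstein (s : ℂ) (z : ℂ) : ℂ :=
  (1 / 2) * ∑' p : ℤ × ℤ,
    if Int.gcd p.1 p.2 = 1 then
      ((z.im : ℂ) ^ s) / ((‖(p.1 : ℂ) * z + (p.2 : ℂ)‖ : ℂ) ^ (2 * s))
    else 0

/-- The scattering function `φ̂(s) = √π · Γ(s−1/2)/Γ(s) · ζ(2s−1)/ζ(2s)`. -/
noncomputable def phiHat (s : ℂ) : ℂ :=
  (Real.sqrt Real.pi : ℂ) * (Complex.Gamma (s - 1 / 2) / Complex.Gamma s) *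
    (riemannZeta (2 * s - 1) / riemannZeta (2 * s))

open MeasureTheory Set in
lemma beta_aux (s : ℂ) (hs : 1/2 < s.re) :
    ∫ t : ℝ, (1 / ((1 + t^2 : ℝ) : ℂ)) ^ s = (Real.sqrt Real.pi : ℂ) * (Complex.Gamma (s - 1 / 2) / Complex.Gamma s) := by
  have hG : Complex.Gamma s ≠ 0 := Complex.Gamma_ne_zero_of_re_pos (by linarith)
  set F : ℝ → ℝ → ℂ := fun t r => (r:ℂ)^(s-1) * cexp (-(((1+t^2:ℝ):ℂ) * r)) with hF
  have h1 : ∀ t : ℝ, ∫ r in Ioi (0:ℝ), F t r = (1 / ((1 + t^2 : ℝ) : ℂ)) ^ s * Complex.Gamma s := by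
    intro t
    exact integral_cpow_mul_exp_neg_mul_Ioi (by linarith) (by positivity)
  have hFe : ∀ t : ℝ, ∀ r : ℝ, F t r = ((r:ℂ)^(s-1) * cexp (-r)) * ((Real.exp (-r * t^2) : ℝ) : ℂ) := by
    intro t r
    simp only [hF]
    rw [mul_assoc, ofReal_exp, ← Complex.exp_add]
    congr 2; push_cast; ring
  have h2 : ∀ r ∈ Ioi (0:ℝ), ∫ t : ℝ, F t r = (Real.sqrt Real.pi : ℂ) * (cexp (-r) * (r:ℂ)^((s-1/2)-1)) := by
    intro r hr
    have hr : 0 < r := hr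
    simp_rw [hFe]
    rw [integral_const_mul, integral_complex_ofReal, integral_gaussian, Real.sqrt_div Real.pi_pos.le, Real.sqrt_eq_rpow r]
    rw [ofReal_div, ofReal_cpow hr.le, show s - 1/2 - 1 = (s-1) - ((1/2:ℝ):ℂ) by push_cast; ring, cpow_sub (s-1) ((1/2:ℝ):ℂ) (by exact_mod_cast hr.ne')]
    ring
  have h2' : ∀ r ∈ Ioi (0:ℝ), ∫ t : ℝ, ‖F t r‖ = Real.sqrt Real.pi * ‖(cexp (-r) * (r:ℂ)^((s-1/2)-1))‖ := by
    intro r hr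
    have hr : 0 < r := hr
    simp_rw [hFe, norm_mul, norm_real, Real.norm_eq_abs, Real.abs_exp]
    rw [integral_const_mul, integral_gaussian, Real.sqrt_div Real.pi_pos.le, Real.sqrt_eq_rpow r]
    rw [norm_cpow_eq_rpow_re_of_pos hr, norm_cpow_eq_rpow_re_of_pos hr,
      show (s - 1/2 - 1).re = (s-1).re - 1/2 by simp; ring, Real.rpow_sub hr]
    ring
  have hm : AEStronglyMeasurable (Function.uncurry F) (volume.prod (volume.restrict (Ioi (0:ℝ)))) := by
    apply Measurable.aestronglyMeasurable
    simp only [hF, Function.uncurry_def]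
    fun_prop
  have hI : Integrable (fun r : ℝ => (cexp (-r) * (r:ℂ)^((s-1/2)-1))) (volume.restrict (Ioi (0:ℝ))) := by
    have := Complex.GammaIntegral_convergent (s := s - 1/2) (by simp; linarith)
    simpa [IntegrableOn] using this
  have hint : Integrable (Function.uncurry F) (volume.prod (volume.restrict (Ioi (0:ℝ)))) := by
    rw [integrable_prod_iff' hm]
    constructor
    · refine (ae_restrict_iff' measurableSet_Ioi).2 (.of_forall fun r hr => ?_)
      simp only [Function.uncurry]
      simp_rw [hFe]
      exact ((integrable_exp_neg_mul_sq hr).ofReal).const_mul _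
    · refine (hI.norm.const_mul (Real.sqrt Real.pi)).congr ?_
      refine (ae_restrict_iff' measurableSet_Ioi).2 (.of_forall fun r hr => ?_)
      exact (h2' r hr).symm
  have h3 := integral_integral_swap hint
  simp_rw [h1] at h3
  rw [setIntegral_congr_fun measurableSet_Ioi h2, integral_mul_const, integral_const_mul] at h3
  have h4 : ∫ r in Ioi (0:ℝ), (cexp (-r) * (r:ℂ)^((s-1/2)-1)) = Complex.Gamma (s-1/2) := by
    rw [Complex.Gamma_eq_integral (by simp; linarith), Complex.GammaIntegral]
    simp
  rw [h4] at h3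
  rw [← mul_div_assoc, eq_div_iff hG, h3]

/-- kernel -/
noncomputable def eisKer (s : ℂ) (a : ℝ) (u : ℝ) : ℂ := 1 / ((‖(u:ℂ) + a * I‖ : ℂ) ^ (2*s))

lemma eisKer_one (s : ℂ) (u : ℝ) : eisKer s 1 u = (1 / ((1 + u^2 : ℝ) : ℂ)) ^ s := by
  have h : (0:ℝ) < 1 + u^2 := by positivity
  have h2 : ‖(u:ℂ) + (1:ℝ) * I‖ = Real.sqrt (1+u^2) := by
    rw [Complex.norm_add_mul_I]; congr 1; ring
  have h3 : 0 < Real.sqrt (1+u^2) := Real.sqrt_pos.2 h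
  rw [eisKer, h2]
  rw [one_div, one_div, ← ofReal_inv]
  rw [cpow_def_of_ne_zero (by exact_mod_cast h3.ne'), cpow_def_of_ne_zero (by exact_mod_cast (inv_pos.2 h).ne'), ← Complex.exp_neg, ← ofReal_log h3.le, ← ofReal_log (inv_pos.2 h).le, Real.log_inv, Real.log_sqrt h.le]
  congr 1; push_cast; ring

open MeasureTheory in
lemma eisKer_one_integrable (s : ℂ) (hs : 1 < s.re) : Integrable (eisKer s 1) := by
  refine integrable_inv_one_add_sq.mono' ?_ (.of_forall fun u => ?_)
  · apply Measurable.aestronglyMeasurable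
    unfold eisKer; fun_prop
  · have h : (1:ℝ) ≤ 1 + u^2 := by nlinarith [sq_nonneg u]
    rw [eisKer_one, one_div, ← ofReal_inv, norm_cpow_eq_rpow_re_of_pos (by positivity)]
    calc _ ≤ ((1+u^2)⁻¹)^(1:ℝ) := Real.rpow_le_rpow_of_exponent_ge (by positivity) (inv_le_one_of_one_le₀ h) hs.le
      _ = _ := Real.rpow_one _

lemma eisKer_scale (s : ℂ) (b : ℝ) (hb : 0 < b) (a u : ℝ) :
    eisKer s (b * a) (b * u) = (b:ℂ)^(-(2*s)) * eisKer s a u := by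
  unfold eisKer
  have : ((b * u : ℝ) : ℂ) + (b*a:ℝ) * I = b * (u + a * I) := by push_cast; ring
  rw [this, norm_mul, norm_real, Real.norm_of_nonneg hb.le, ofReal_mul, mul_cpow_ofReal_nonneg hb.le (norm_nonneg _), cpow_neg]
  ring

open MeasureTheory in
lemma eisKer_integrable (s : ℂ) (hs : 1 < s.re) (a : ℝ) (ha : 0 < a) : Integrable (eisKer s a) := by
  have : eisKer s a = fun u => (a:ℂ)^(-(2*s)) * eisKer s 1 (a⁻¹ * u) := by
    ext u
    rw [← eisKer_scale _ _ ha, mul_inv_cancel_left₀ ha.ne', mul_one]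
  rw [this]
  exact ((eisKer_one_integrable s hs).comp_mul_left' (inv_ne_zero ha.ne')).const_mul _

open MeasureTheory in
lemma eisKer_integral (s : ℂ) (hs : 1 < s.re) (a : ℝ) (ha : 0 < a) :
    ∫ u, eisKer s a u = (a:ℂ)^(1-2*s) * ((Real.sqrt Real.pi : ℂ) * (Complex.Gamma (s - 1 / 2) / Complex.Gamma s)) := by
  have : eisKer s a = fun u => (a:ℂ)^(-(2*s)) * eisKer s 1 (a⁻¹ * u) := by
    ext u
    rw [← eisKer_scale _ _ ha, mul_inv_cancel_left₀ ha.ne', mul_one]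
  rw [this, integral_const_mul, Measure.integral_comp_mul_left (eisKer s 1)]
  simp_rw [eisKer_one]
  rw [beta_aux s (by linarith), inv_inv, abs_of_pos ha, real_smul, sub_eq_add_neg (1:ℂ), cpow_add _ _ (by exact_mod_cast ha.ne'), cpow_one]
  ring

/-- shifted sum -/
lemma eisKer_sum (f : ℝ → ℂ) (hfc : Continuous f) (hf : MeasureTheory.Integrable f) (c : ℕ) (hc : 0 < c) :
    HasSum (fun d : ℤ => ∫ x in (0:ℝ)..1, f (c * x + d)) (∫ u, f u) := by
  have hc' : (c:ℝ) ≠ 0 := by positivity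
  have h0 := hf.hasSum_intervalIntegral_comp_add_int
  have h1 : ∀ k : ℕ, HasSum (fun d : ℤ => ∫ x in (0:ℝ)..1, f (x + (d + k : ℤ))) (∫ u, f u) := fun k =>
    (Equiv.addRight (k:ℤ)).hasSum_iff.2 h0
  have h2 := hasSum_sum (s := Finset.range c) fun k _ => h1 k
  have h3 := h2.mul_left ((c:ℂ)⁻¹)
  have e1 : (fun d : ℤ => ∫ x in (0:ℝ)..1, f (c * x + d)) = fun d : ℤ => (c:ℂ)⁻¹ * ∑ k ∈ Finset.range c, ∫ x in (0:ℝ)..1, f (x + (d + k : ℤ)) := by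
    funext d
    have : (∫ x in (0:ℝ)..1, f (c * x + d)) = (c:ℝ)⁻¹ • ∫ x in (0:ℝ)..c, f (x + d) := by
      have := intervalIntegral.integral_comp_mul_left (a := 0) (b := 1) (fun x => f (x + d)) hc'
      simpa using this
    rw [this, real_smul]
    push_cast
    congr 1
    have h4 := intervalIntegral.sum_integral_adjacent_intervals (f := fun x => f (x + d)) (μ := MeasureTheory.volume) (a := fun k : ℕ => (k:ℝ)) (n := c) (fun k _ => Continuous.intervalIntegrable (by fun_prop) _ _)
    simp only [Nat.cast_zero] at h4
    rw [← h4]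
    refine Finset.sum_congr rfl fun k _ => ?_
    have := intervalIntegral.integral_comp_add_right (a := 0) (b := 1) (fun x => f (x + d)) (k:ℝ)
    rw [zero_add, add_comm (1:ℝ)] at this
    push_cast
    rw [← this]
    congr 1; ext x; congr 1; ring
  have hc2 : (c:ℂ) ≠ 0 := by exact_mod_cast hc'
  have e2 : (c:ℂ)⁻¹ * ∑ k ∈ Finset.range c, ∫ u, f u = ∫ u, f u := by
    simp [hc2]
  rw [e2] at h3
  rw [e1]
  exact h3

lemma eisKer_continuous (s : ℂ) (a : ℝ) (ha : 0 < a) : Continuous (eisKer s a) := by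
  unfold eisKer
  have hne : ∀ u : ℝ, 0 < ‖(u:ℂ) + a * I‖ := by
    intro u
    rw [norm_pos_iff]
    intro h
    have := congrArg Complex.im h
    simp at this
    exact ha.ne' this
  refine continuous_const.div ?_ fun u => ?_
  · refine Continuous.cpow (by fun_prop) continuous_const fun u => ?_
    exact Or.inl (by exact_mod_cast hne u)
  · rw [Ne, cpow_eq_zero_iff]
    have := hne u
    rintro ⟨h, -⟩
    exact this.ne' (by exact_mod_cast h)

lemma eisKer_neg (s : ℂ) (a u : ℝ) : eisKer s (-a) (-u) = eisKer s a u := by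
  unfold eisKer
  have : ((-u : ℝ) : ℂ) + (-a:ℝ) * I = - (u + a * I) := by push_cast; ring
  rw [this, norm_neg]

/-- integrated summand -/
noncomputable def eisA (s : ℂ) (y : ℝ) (p : ℤ × ℤ) : ℂ :=
  ∫ x in (0:ℝ)..1, eisKer s (p.1 * y) (p.1 * x + p.2)

lemma eisA_neg (s : ℂ) (y : ℝ) (c d : ℤ) : eisA s y (-c, -d) = eisA s y (c, d) := by
  unfold eisA
  congr 1; ext x
  rw [← eisKer_neg]
  congr 1 <;> push_cast <;> ring

lemma eisA_smul (s : ℂ) (y : ℝ) (n : ℕ) (hn : 0 < n) (c d : ℤ) :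
    eisA s y (n * c, n * d) = (n:ℂ)^(-(2*s)) * eisA s y (c, d) := by
  unfold eisA
  rw [← intervalIntegral.integral_const_mul]
  congr 1; ext x
  have := eisKer_scale s n (by exact_mod_cast hn) (c * y) (c * x + d)
  rw [ofReal_natCast] at this
  rw [← this]
  congr 1 <;> push_cast <;> ring

lemma eisA_zero_left (s : ℂ) (y : ℝ) (d : ℤ) : eisA s y (0, d) = 1 / ((|(d:ℝ)| : ℝ) : ℂ)^(2*s) := by
  simp [eisA, eisKer]

lemma eisA_row (s : ℂ) (hs : 1 < s.re) (y : ℝ) (hy : 0 < y) (n : ℕ) (hn : 0 < n) :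
    ∑' d : ℤ, eisA s y (n, d) = ((n:ℂ)^(1-2*s)) * ((y:ℂ)^(1-2*s) *
      ((Real.sqrt Real.pi : ℂ) * (Complex.Gamma (s - 1 / 2) / Complex.Gamma s))) := by
  have hpos : 0 < (n:ℝ) * y := by positivity
  have h := eisKer_sum (eisKer s (n*y)) (eisKer_continuous s _ hpos) (eisKer_integrable s hs _ hpos) n hn
  rw [eisKer_integral s hs _ hpos, ofReal_mul, mul_cpow_ofReal_nonneg (by positivity) hy.le, mul_assoc] at h
  simpa [eisA] using h.tsum_eq

lemma eisKer_bound (s : ℂ) (hs : 1 < s.re) (y : ℝ) (hy : 0 < y) :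
    ∃ b : ℤ × ℤ → ℝ, Summable b ∧ ∀ p : ℤ × ℤ, ∀ x ∈ Set.Icc (0:ℝ) 1,
      ‖eisKer s (p.1 * y) (p.1 * x + p.2)‖ ≤ b p := by
  refine ⟨fun p => EisensteinSeries.r ⟨⟨1, y⟩, hy⟩ ^ (-(2*s.re)) * ‖![p.1, p.2]‖ ^ (-(2*s.re)), ?_, ?_⟩
  · apply Summable.mul_left
    have := EisensteinSeries.summable_one_div_norm_rpow (k := 2 * s.re) (by linarith)
    exact (finTwoArrowEquiv ℤ).symm.summable_iff.2 this
  · intro p x hx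
    have hz : (⟨(x:ℂ) + y * I, by simpa using hy⟩ : UpperHalfPlane) ∈ UpperHalfPlane.verticalStrip 1 y := by
      rw [UpperHalfPlane.mem_verticalStrip_iff]
      constructor
      · rw [show UpperHalfPlane.re ⟨(x:ℂ) + y * I, by simpa using hy⟩ = x by
          simp [UpperHalfPlane.re]]
        rw [abs_le]; constructor <;> linarith [hx.1, hx.2]
      · simp [UpperHalfPlane.im]
    have := EisensteinSeries.summand_bound_of_mem_verticalStrip (k := 2*s.re) (by linarith) ![p.1, p.2] hy hz
    refine le_trans (le_of_eq ?_) this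
    have h1 : (((p.1 * x + p.2 : ℝ) : ℂ) + (p.1 * y : ℝ) * I) = (p.1 * ((x:ℂ) + y * I) + p.2) := by
      push_cast; ring
    simp only [Matrix.cons_val_zero, Matrix.cons_val_one]
    unfold eisKer
    rw [h1, norm_div, norm_one, norm_cpow_eq_rpow_re_of_nonneg (norm_nonneg _) (by simp; linarith), one_div, Real.rpow_neg (norm_nonneg _)]
    congr 2
    simp

lemma eisA_summable_norm (s : ℂ) (hs : 1 < s.re) (y : ℝ) (hy : 0 < y) : Summable fun p => ‖eisA s y p‖ := by
  obtain ⟨b, hb, hb'⟩ := eisKer_bound s hs y hy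
  refine hb.of_nonneg_of_le (fun _ => norm_nonneg _) fun p => ?_
  have := intervalIntegral.norm_integral_le_of_norm_le_const (a := 0) (b := 1) (C := b p)
    (f := fun x => eisKer s (p.1 * y) (p.1 * x + p.2)) fun x hx => by
      rw [Set.uIoc_of_le zero_le_one] at hx
      exact hb' p x ⟨hx.1.le, hx.2⟩
  simpa [eisA] using this

lemma eis_integral (s : ℂ) (hs : 1 < s.re) (y : ℝ) (hy : 0 < y) :
    ∫ x in (0 : ℝ)..1, eisenstein s ((x : ℂ) + y * Complex.I) =
      (1/2) * ((y:ℂ)^s * ∑' p : ℤ × ℤ, if Int.gcd p.1 p.2 = 1 then eisA s y p else 0) := by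
  obtain ⟨b, hb, hb'⟩ := eisKer_bound s hs y hy
  set G : ℤ × ℤ → ℝ → ℂ := fun p x => if Int.gcd p.1 p.2 = 1 then eisKer s (p.1 * y) (p.1 * x + p.2) else 0 with hG
  have hGb : ∀ p x, x ∈ Set.uIoc (0:ℝ) 1 → ‖G p x‖ ≤ b p := by
    intro p x hx
    rw [Set.uIoc_of_le zero_le_one] at hx
    have := hb' p x ⟨hx.1.le, hx.2⟩
    simp only [hG]
    split_ifs
    · exact this
    · rw [norm_zero]; exact (norm_nonneg _).trans this
  have h1 : ∀ x : ℝ, eisenstein s ((x : ℂ) + y * Complex.I) = (1/2) * ((y:ℂ)^s * ∑' p, G p x) := by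
    intro x
    rw [eisenstein]
    congr 1
    rw [← tsum_mul_left]
    refine tsum_congr fun p => ?_
    simp only [hG, mul_ite, mul_zero, eisKer]
    have h1 : (((p.1 * x + p.2 : ℝ) : ℂ) + (p.1 * y : ℝ) * I) = (p.1 * ((x:ℂ) + y * I) + p.2) := by
      push_cast; ring
    rw [h1]
    simp [div_eq_mul_inv]
  simp_rw [h1]
  rw [intervalIntegral.integral_const_mul, intervalIntegral.integral_const_mul]
  congr 2
  have h2 := intervalIntegral.hasSum_integral_of_dominated_convergence (μ := MeasureTheory.volume) (a := 0) (b := 1) (F := G)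
    (f := fun x => ∑' p, G p x) (fun p _ => b p) (fun p => ?_) (fun p => .of_forall fun x hx => hGb p x hx)
    (.of_forall fun _ _ => hb) (by simp) (.of_forall fun x hx => ?_)
  · rw [← h2.tsum_eq]
    congr 1; ext p
    simp only [hG]
    split_ifs
    · rfl
    · simp
  · apply Measurable.aestronglyMeasurable
    simp only [hG, eisKer]
    split_ifs <;> fun_prop
  · exact (Summable.of_norm_bounded hb fun p => hGb p x hx).hasSum

lemma zeta_pnat (s : ℂ) (hs : 1 < s.re) : ∑' n : ℕ+, ((n:ℕ):ℂ)^(-s) = riemannZeta s := by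
  rw [zeta_eq_tsum_one_div_nat_add_one_cpow hs, tsum_pnat_eq_tsum_succ (f := fun n : ℕ => (n:ℂ)^(-s))]
  congr 1; ext n
  rw [cpow_neg, one_div]; push_cast; rfl

lemma zeta_mul (s : ℂ) (hs : 1 < s.re) (y : ℝ) (hy : 0 < y) :
    riemannZeta (2*s) * (∑' p : ℤ × ℤ, if Int.gcd p.1 p.2 = 1 then eisA s y p else 0) = ∑' p, eisA s y p := by
  have hs2 : 1 < (2*s).re := by simp; linarith
  set C : Set (ℤ × ℤ) := {p | Int.gcd p.1 p.2 = 1} with hC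
  have e1 : (∑' p : ℤ × ℤ, if Int.gcd p.1 p.2 = 1 then eisA s y p else 0) = ∑' p : C, eisA s y p := by
    rw [tsum_subtype C (eisA s y)]
    refine tsum_congr fun p => ?_
    simp only [Set.indicator_apply, hC, Set.mem_ofPred_eq]
  rw [e1, ← zeta_pnat _ hs2, tsum_mul_tsum_of_summable_norm]
  · set φ : ℕ+ × C → ℤ × ℤ := fun q => (((q.1:ℕ):ℤ) * q.2.1.1, ((q.1:ℕ):ℤ) * q.2.1.2) with hφ
    have hgcd : ∀ q, Int.gcd (φ q).1 (φ q).2 = q.1 := by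
      rintro ⟨n, ⟨p, hp⟩⟩
      have hp : Int.gcd p.1 p.2 = 1 := hp
      simp [hφ, Int.gcd_mul_left, hp]
    have hinj : Function.Injective φ := by
      intro q q' h
      have h1 : q.1 = q'.1 := by
        apply PNat.coe_injective
        rw [← hgcd, ← hgcd, h]
      obtain ⟨n, ⟨⟨c, d⟩, hp⟩⟩ := q
      obtain ⟨n', ⟨⟨c', d'⟩, hp'⟩⟩ := q'
      simp only at h1
      subst h1
      simpa [hφ] using h
    have hsupp : Function.support (eisA s y) ⊆ Set.range φ := by
      rintro ⟨c, d⟩ h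
      have hne : 0 < Int.gcd c d := by
        rw [Nat.pos_iff_ne_zero, Ne, Int.gcd_eq_zero_iff]
        rintro ⟨rfl, rfl⟩
        apply h
        have : 2 * s ≠ 0 := by
          intro h0; rw [h0] at hs2; norm_num at hs2
        rw [eisA_zero_left]
        have h3 : s ≠ 0 := by
          rintro rfl
          simp at this
        simp [h3]
      obtain ⟨c', d', hg, hc', hd'⟩ := Int.exists_gcd_one hne
      refine ⟨⟨⟨_, hne⟩, ⟨(c', d'), hg⟩⟩, ?_⟩
      simp only [hφ, PNat.mk_coe]
      rw [mul_comm _ c', mul_comm _ d', ← hc', ← hd']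
    rw [← hinj.tsum_eq hsupp]
    congr 1; ext q
    rw [← eisA_smul s y q.1 q.1.pos]
  · have := (Complex.summable_one_div_nat_cpow.2 hs2).norm.comp_injective PNat.coe_injective
    simpa [Function.comp_def, cpow_neg] using this
  · exact (eisA_summable_norm s hs y hy).subtype C

lemma full_sum (s : ℂ) (hs : 1 < s.re) (y : ℝ) (hy : 0 < y) :
    ∑' p, eisA s y p = 2 * riemannZeta (2*s) + 2 * (riemannZeta (2*s-1) * ((y:ℂ)^(1-2*s) *
      ((Real.sqrt Real.pi : ℂ) * (Complex.Gamma (s - 1 / 2) / Complex.Gamma s)))) := by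
  have hs2 : 1 < (2*s).re := by simp; linarith
  have hs1 : 1 < (2*s-1).re := by simp; linarith
  have hs0 : s ≠ 0 := by
    intro h0; rw [h0] at hs; norm_num at hs
  have hS := (eisA_summable_norm s hs y hy).of_norm
  rw [hS.tsum_prod]
  have hev : (fun c : ℤ => ∑' d : ℤ, eisA s y (c, d)).Even := by
    intro c
    simp only
    rw [← (Equiv.neg ℤ).tsum_eq]
    congr 1; ext d
    exact eisA_neg s y c d
  rw [tsum_int_eq_zero_add_two_mul_tsum_pnat hev hS.prod]
  have hev0 : (fun d : ℤ => eisA s y (0, d)).Even := by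
    intro d
    have := eisA_neg s y 0 d
    simpa using this
  rw [tsum_int_eq_zero_add_two_mul_tsum_pnat hev0 (hS.prod_factor 0)]
  have hrow : ∀ n : ℕ+, ∑' d : ℤ, eisA s y (((n:ℕ):ℤ), d) = _ := fun n => eisA_row s hs y hy n n.pos
  have h0 : ∀ n : ℕ+, eisA s y (0, ((n:ℕ):ℤ)) = ((n:ℕ):ℂ)^(-(2*s)) := by
    intro n
    rw [eisA_zero_left, cpow_neg, one_div]
    simp
  simp only [hrow, h0]
  rw [zeta_pnat _ hs2, tsum_mul_right, ← zeta_pnat _ hs1, eisA_zero_left]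
  simp [hs0]

theorem eisenstein_constant_coeff (s : ℂ) (hs : 1 < s.re) (y : ℝ) (hy : 0 < y) :
    ∫ x in (0 : ℝ)..1, eisenstein s ((x : ℂ) + y * Complex.I) =
      (y : ℂ) ^ s + phiHat s * (y : ℂ) ^ (1 - s) := by
  have hs2 : 1 < (2*s).re := by simp; linarith
  have hz : riemannZeta (2*s) ≠ 0 := riemannZeta_ne_zero_of_one_le_re hs2.le
  have h := zeta_mul s hs y hy
  rw [full_sum s hs y hy] at h
  have hy' : (y:ℂ) ≠ 0 := by exact_mod_cast hy.ne'
  rw [eis_integral s hs y hy, eq_div_of_mul_eq hz ((mul_comm _ _).trans h), phiHat,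
    show (1:ℂ) - s = s + (1 - 2*s) by ring, cpow_add _ _ hy']
  field_simp
end
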